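/- Under the construction setup with assumptions (I)–(VI): the increase of the mean opinion satisfies (∫_{A_y} y dμ)/μ(A_y) − (∫_{A_x} x dμ)/μ(A_x) ≤ 4 μ(B_x)/μ(A), where A_y = y⁻¹([0, 2ε]). -/

import Mathlib

open MeasureTheory Set

/-- The neighbourhood set `N_x(α) = {β ∈ [0,1] : |x(β) − x(α)| ≤ 1}`. -/
def hkNbhd (x : ℝ → ℝ) (α : ℝ) : Set ℝ :=
  {β | β ∈ Icc (0:ℝ) 1 ∧ |x β - x α| ≤ 1}

/-- The continuous-agent Hegselmann–Krause update
`Tx(α) = (∫_{N_x(α)} x dμ) / μ(N_x(α))`. -/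
noncomputable def hkT (x : ℝ → ℝ) : ℝ → ℝ :=
  fun α => (∫ β in hkNbhd x α, x β) / (volume (hkNbhd x α)).toReal

/-- A function `x : [0,1] → ℝ` is regular if it is continuous, nondecreasing,
differentiable outside a set of measure zero, and there are constants
`0 < m ≤ M` with `m ≤ x′ ≤ M` wherever the derivative exists. -/
def Regular (x : ℝ → ℝ) : Prop :=
  ContinuousOn x (Icc 0 1) ∧ MonotoneOn x (Icc 0 1) ∧
  ∃ m M : ℝ, 0 < m ∧ m ≤ M ∧
    (∀ᵐ α ∂(volume.restrict (Icc (0:ℝ) 1)), DifferentiableAt ℝ x α) ∧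
    ∀ α ∈ Icc (0:ℝ) 1, DifferentiableAt ℝ x α → m ≤ deriv x α ∧ deriv x α ≤ M


lemma hk_meas_sub (x : ℝ → ℝ) (hc : ContinuousOn x (Icc 0 1)) (u : Set ℝ) (hu : IsClosed u) :
    MeasurableSet {α | α ∈ Icc (0:ℝ) 1 ∧ x α ∈ u} :=
  (hc.preimage_isClosed_of_isClosed isClosed_Icc hu).measurableSet

lemma hk_nbhd_meas (x : ℝ → ℝ) (hc : ContinuousOn x (Icc 0 1)) (α : ℝ) :
    MeasurableSet (hkNbhd x α) := by
  have h := hk_meas_sub x hc {t | |t - x α| ≤ 1}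
    (isClosed_le (by fun_prop) (by fun_prop))
  exact h

lemma hk_nbhd_pos (x : ℝ → ℝ) (hc : ContinuousOn x (Icc 0 1)) (α : ℝ) (hα : α ∈ Icc (0:ℝ) 1) :
    0 < volume (hkNbhd x α) := by
  have h1 : {β | |x β - x α| < 1} ∈ nhdsWithin α (Icc 0 1) := by
    have := (hc α hα) (Metric.ball_mem_nhds (x α) one_pos)
    filter_upwards [this] with b hb
    simpa [Real.dist_eq] using hb
  obtain ⟨U, hU, hαU, hsub⟩ := mem_nhdsWithin.1 h1
  have h2 : α ∈ closure (Ioo (0:ℝ) 1) := by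
    rw [closure_Ioo (by norm_num)]; exact hα
  have h3 : (U ∩ Ioo (0:ℝ) 1).Nonempty := mem_closure_iff.1 h2 U hU hαU
  have h4 := (hU.inter isOpen_Ioo).measure_pos volume h3
  refine h4.trans_le (measure_mono ?_)
  rintro b ⟨hb1, hb2⟩
  have hb3 : b ∈ Icc (0:ℝ) 1 := Ioo_subset_Icc_self hb2
  exact ⟨hb3, le_of_lt (hsub ⟨hb1, hb3⟩)⟩

lemma hk_T_meas (x : ℝ → ℝ) (hc : ContinuousOn x (Icc 0 1)) :
    ∃ g : ℝ → ℝ, Measurable g ∧ ∀ α ∈ Icc (0:ℝ) 1, hkT x α = g α := by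
  set z : ℝ → ℝ := (Icc (0:ℝ) 1).indicator x with hz
  have hzm : Measurable z := by
    classical
    rw [hz, ← piecewise_eq_indicator]
    exact hc.measurable_piecewise continuousOn_const measurableSet_Icc
  have hzx : ∀ α ∈ Icc (0:ℝ) 1, z α = x α := fun α h => indicator_of_mem h x
  let S : Set (ℝ × ℝ) := {p | p.2 ∈ Icc (0:ℝ) 1 ∧ |z p.2 - z p.1| ≤ 1}
  have hS : MeasurableSet S := by
    apply MeasurableSet.inter
    · exact measurable_snd measurableSet_Icc
    · have h : Measurable fun p : ℝ × ℝ => |z p.2 - z p.1| := by fun_prop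
      exact measurableSet_le h measurable_const
  have hsl : ∀ α ∈ Icc (0:ℝ) 1, hkNbhd x α = Prod.mk α ⁻¹' S := by
    intro α hα
    ext b
    simp only [hkNbhd, S, mem_ofPred_eq, mem_preimage]
    constructor
    · rintro ⟨h1, h2⟩; exact ⟨h1, by rw [hzx b h1, hzx α hα]; exact h2⟩
    · rintro ⟨h1, h2⟩; exact ⟨h1, by rw [hzx b h1, hzx α hα] at h2; exact h2⟩
  refine ⟨fun α => (∫ β, S.indicator (fun p => z p.2) (α, β)) /
    (volume (Prod.mk α ⁻¹' S)).toReal, ?_, ?_⟩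
  · apply Measurable.div
    · have : StronglyMeasurable (S.indicator (fun p : ℝ × ℝ => z p.2)) :=
        ((hzm.comp measurable_snd).indicator hS).stronglyMeasurable
      exact (this.integral_prod_right' (ν := volume)).measurable
    · exact (measurable_measure_prodMk_left hS).ennreal_toReal
  · intro α hα
    have hm := hk_nbhd_meas x hc α
    simp only [hkT]
    rw [← hsl α hα, ← integral_indicator hm]
    congr 2
    ext b
    by_cases hb : b ∈ hkNbhd x α
    · have : (α, b) ∈ S := by rw [hsl α hα] at hb; exact hb
      rw [indicator_of_mem hb, indicator_of_mem this, hzx b hb.1]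
    · have : (α, b) ∉ S := by rw [hsl α hα] at hb; exact hb
      rw [indicator_of_notMem hb, indicator_of_notMem this]

/-- Lemma 2 of the paper: the increase of the mean opinion over `A_t` is at most
linear in `μ(B_t)`: `Ā_{t+1} − Ā_t ≤ 4 μ(B_t)/μ(A)`. -/
theorem hk_mean_increase
    -- the confidence/width parameter ε and the fixed constant d = 3/2
    (ε d : ℝ) (hε : 0 < ε) (hε' : ε ≤ 1/10) (hd : d = 3/2)
    -- partition of [0,1] into consecutive closed intervals A, B, C, D, E
    (a₁ a₂ a₃ a₄ : ℝ)
    (h₀₁ : 0 ≤ a₁) (h₁₂ : a₁ ≤ a₂) (h₂₃ : a₂ ≤ a₃) (h₃₄ : a₃ ≤ a₄) (h₄₅ : a₄ ≤ 1)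
    (A B C D E : Set ℝ)
    (hA : A = Icc 0 a₁) (hB : B = Icc a₁ a₂) (hC : C = Icc a₂ a₃)
    (hD : D = Icc a₃ a₄) (hE : E = Icc a₄ 1)
    -- |B| = |D| = ε²|C|, |C| = ε²|A| = ε²|E| (symmetric about 1/2)
    (hlenB : a₂ - a₁ = ε^2 * (a₃ - a₂))
    (hlenD : a₄ - a₃ = ε^2 * (a₃ - a₂))
    (hlenC : a₃ - a₂ = ε^2 * a₁)
    (hlenE : 1 - a₄ = a₁)
    -- the opinion function x : regular, nonnegative, anti-symmetric about 1/2
    (x : ℝ → ℝ) (hreg : Regular x)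
    (hnonneg : ∀ α ∈ Icc (0:ℝ) 1, 0 ≤ x α)
    (hsym : ∀ s ∈ Icc (0:ℝ) (1/2), x (1/2 + s) + x (1/2 - s) = 2 * x (1/2))
    (hmid : x (1/2) = d + 3*ε/2)
    -- the sets A_x = x⁻¹([0,2ε]), B_x = x⁻¹([2ε, d+ε]) and the mean Ā on A_x
    (Ax Bx : Set ℝ) (Abar : ℝ)
    (hAx : Ax = {α ∈ Icc (0:ℝ) 1 | x α ∈ Icc 0 (2*ε)})
    (hBx : Bx = {α ∈ Icc (0:ℝ) 1 | x α ∈ Icc (2*ε) (d + ε)})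
    (hAbar : Abar = (∫ α in Ax, x α) / (volume Ax).toReal)
    -- derivative bounds e, s > 0
    (e s : ℝ) (he : 0 < e) (hs : 0 < s)
    -- Assumptions (I)–(VI)
    (hI : A ⊆ Ax)
    (hII : Bx ⊆ B)
    (hIII : x '' A ⊆ Icc 0 ε)
    (hIV : ∀ α ∈ A, DifferentiableAt ℝ x α → deriv x α ≤ e)
    (hV : ∀ α ∈ Bx, DifferentiableAt ℝ x α → s ≤ deriv x α)
    (hVI : ε - Abar > 2*ε^2)
    -- the updated opinion function y = Tx
    (y : ℝ → ℝ) (hy : y = hkT x)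
    (Ay : Set ℝ)
    (hAy : Ay = {α ∈ Icc (0:ℝ) 1 | y α ∈ Icc 0 (2*ε)}) :
    (∫ α in Ay, y α) / (volume Ay).toReal - Abar
      ≤ 4 * (volume Bx).toReal / (volume A).toReal := by
  obtain ⟨hc, -, -⟩ := hreg
  have hint : IntegrableOn x (Icc 0 1) := hc.integrableOn_compact isCompact_Icc
  have ha1 : 0 < a₁ := by
    by_contra h
    have : a₁ = 0 := le_antisymm (not_lt.1 h) h₀₁
    subst this
    rw [hlenC] at hlenB hlenD
    nlinarith
  have hAxm : MeasurableSet Ax := by rw [hAx]; exact hk_meas_sub x hc _ isClosed_Icc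
  have hBxm : MeasurableSet Bx := by rw [hBx]; exact hk_meas_sub x hc _ isClosed_Icc
  have hAxI : Ax ⊆ Icc 0 1 := by rw [hAx]; exact fun _ h => h.1
  have hBxI : Bx ⊆ Icc 0 1 := by rw [hBx]; exact fun _ h => h.1
  have hfin : ∀ S : Set ℝ, S ⊆ Icc 0 1 → volume S ≠ ⊤ := fun S hS =>
    ((measure_mono hS).trans_lt (by simp)).ne
  have hvA : (volume A).toReal = a₁ := by
    rw [hA, Real.volume_Icc, ENNReal.toReal_ofReal] <;> linarith
  have hvAx : a₁ ≤ (volume Ax).toReal := by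
    rw [← hvA]; exact ENNReal.toReal_mono (hfin _ hAxI) (measure_mono hI)
  have hvBx : (volume Bx).toReal ≤ ε^2 * (ε^2 * a₁) := by
    have h1 : (volume B).toReal = ε^2 * (ε^2 * a₁) := by
      rw [hB, Real.volume_Icc, ENNReal.toReal_ofReal (by linarith), hlenB, hlenC]
    rw [← h1]
    exact ENNReal.toReal_mono (by rw [hB]; simp) (measure_mono hII)
  have hvB0 : 0 ≤ (volume Bx).toReal := ENNReal.toReal_nonneg
  have hvAx0 : 0 < (volume Ax).toReal := ha1.trans_le hvAx
  set mA := (volume Ax).toReal with hmA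
  set mB := (volume Bx).toReal with hmB
  have hIA : ∫ α in Ax, x α = Abar * mA := by
    rw [hAbar]; field_simp
  have hAbar0 : 0 ≤ Abar := by
    rw [hAbar]
    exact div_nonneg (setIntegral_nonneg hAxm fun a ha => hnonneg a (hAxI ha)) hvAx0.le
  have hr : mB / mA ≤ ε^4 := by
    rw [div_le_iff₀ hvAx0]
    have : ε^4 * a₁ ≤ ε^4 * mA := by gcongr
    nlinarith
  have hr1 : mB / mA ≤ mB / a₁ := by gcongr
  have hr0 : 0 ≤ mB / mA := by positivity
  have hy0 : ∀ α, 0 ≤ y α := by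
    intro α
    rw [hy]
    exact div_nonneg (setIntegral_nonneg (hk_nbhd_meas x hc α) fun a ha => hnonneg a ha.1)
      ENNReal.toReal_nonneg
  -- the bound on A_x
  have hyA : ∀ α ∈ Ax, y α ≤ Abar + 6/5 * (mB / mA) := by
    intro α hα
    have hNm := hk_nbhd_meas x hc α
    have hα' := hα
    rw [hAx] at hα'
    obtain ⟨hα1, hα2, hα3⟩ := hα'
    have hNI : hkNbhd x α ⊆ Icc 0 1 := fun _ h => h.1
    have hsub1 : Ax ⊆ hkNbhd x α := by
      intro b hb
      refine ⟨hAxI hb, ?_⟩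
      rw [hAx] at hb
      obtain ⟨_, hb2, hb3⟩ := hb
      rw [abs_le]; constructor <;> linarith
    have hle : ∀ b ∈ hkNbhd x α, x b ≤ 6/5 := by
      intro b hb
      have := (abs_le.1 hb.2).2
      linarith
    have hsub2 : hkNbhd x α \ Ax ⊆ Bx := by
      rintro b ⟨hb, hb'⟩
      have h0 := hnonneg b hb.1
      have h1 := hle b hb
      rw [hBx]
      refine ⟨hb.1, ?_, by linarith⟩
      by_contra h
      apply hb'
      rw [hAx]
      exact ⟨hb.1, h0, (not_le.1 h).le⟩
    have hsplit : ∫ b in hkNbhd x α, x b = (∫ b in Ax, x b) + ∫ b in hkNbhd x α \ Ax, x b := by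
      rw [← setIntegral_union disjoint_sdiff_right (hNm.diff hAxm) (hint.mono_set hAxI)
        (hint.mono_set (sdiff_subset.trans hNI)), union_sdiff_cancel hsub1]
    have hd1 : ∫ b in hkNbhd x α \ Ax, x b ≤ 6/5 * mB := by
      have hf : volume (hkNbhd x α \ Ax) ≠ ⊤ := hfin _ (sdiff_subset.trans hNI)
      calc ∫ b in hkNbhd x α \ Ax, x b ≤ ∫ b in hkNbhd x α \ Ax, (6/5 : ℝ) :=
            setIntegral_mono_on (hint.mono_set (sdiff_subset.trans hNI))
              (integrableOn_const hf) (hNm.diff hAxm) fun b hb => hle b hb.1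
        _ = 6/5 * (volume (hkNbhd x α \ Ax)).toReal := by
            rw [setIntegral_const]; simp [Measure.real, mul_comm]
        _ ≤ 6/5 * mB := by
            gcongr
            exact ENNReal.toReal_mono (hfin _ hBxI) (measure_mono hsub2)
    have hNA : mA ≤ (volume (hkNbhd x α)).toReal :=
      ENNReal.toReal_mono (hfin _ hNI) (measure_mono hsub1)
    rw [hy]
    calc hkT x α ≤ (Abar * mA + 6/5 * mB) / (volume (hkNbhd x α)).toReal := by
          unfold hkT
          gcongr
          rw [hsplit, hIA]; linarith
      _ ≤ (Abar * mA + 6/5 * mB) / mA := by gcongr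
      _ = Abar + 6/5 * (mB / mA) := by field_simp
  have hε4 : ε^4 ≤ ε^2 := pow_le_pow_of_le_one hε.le (by linarith) (by norm_num)
  have hsubA : Ax ⊆ Ay := by
    intro α hα
    rw [hAy]
    refine ⟨hAxI hα, hy0 α, ?_⟩
    have := hyA α hα
    nlinarith
  have hAyI : Ay ⊆ Icc 0 1 := by rw [hAy]; exact fun _ h => h.1
  have hAyAB : ∀ α ∈ Ay, α ∈ Ax ∨ α ∈ Bx := by
    intro α hα
    rw [hAy] at hα
    obtain ⟨hα1, -, hα3⟩ := hα
    have h0 := hnonneg α hα1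
    rcases le_total (x α) (2*ε) with h | h
    · left; rw [hAx]; exact ⟨hα1, h0, h⟩
    right
    rw [hBx]
    refine ⟨hα1, h, ?_⟩
    by_contra hgt
    have hgt := not_le.1 hgt
    have hNI : hkNbhd x α ⊆ Icc 0 1 := fun _ h => h.1
    have hNm := hk_nbhd_meas x hc α
    have hpos : 0 < (volume (hkNbhd x α)).toReal :=
      ENNReal.toReal_pos (hk_nbhd_pos x hc α hα1).ne' (hfin _ hNI)
    have h1 : (x α - 1) * (volume (hkNbhd x α)).toReal ≤ ∫ b in hkNbhd x α, x b := by
      calc (x α - 1) * (volume (hkNbhd x α)).toReal = ∫ b in hkNbhd x α, (x α - 1) := by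
            rw [setIntegral_const]; simp [Measure.real, mul_comm]
        _ ≤ _ := setIntegral_mono_on (integrableOn_const (hfin _ hNI)) (hint.mono_set hNI) hNm
            fun b hb => by have := (abs_le.1 hb.2).1; linarith
    have h2 : x α - 1 ≤ y α := by
      rw [hy]; unfold hkT; rwa [le_div_iff₀ hpos]
    linarith
  have hAym : MeasurableSet Ay := by
    obtain ⟨g, hg, hgy⟩ := hk_T_meas x hc
    have : Ay = Icc 0 1 ∩ g ⁻¹' Icc 0 (2*ε) := by
      rw [hAy, hy]
      ext a
      constructor
      · rintro ⟨h1, h2⟩; exact ⟨h1, by rw [hgy a h1] at h2; exact h2⟩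
      · rintro ⟨h1, h2⟩; exact ⟨h1, by rw [hgy a h1]; exact h2⟩
    rw [this]
    exact measurableSet_Icc.inter (hg measurableSet_Icc)
  have hmAy : mA ≤ (volume Ay).toReal :=
    ENNReal.toReal_mono (hfin _ hAyI) (measure_mono hsubA)
  set K := Abar + 6/5 * (mB / mA) with hK
  have hK0 : 0 ≤ K := by positivity
  have hfAy := hfin _ hAyI
  have hBint : IntegrableOn (Bx.indicator fun _ => 2*ε) Ay :=
    (integrableOn_const hfAy).indicator hBxm
  have hIy : ∫ α in Ay, y α ≤ K * (volume Ay).toReal + 2*ε*mB := by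
    calc ∫ α in Ay, y α ≤ ∫ α in Ay, (K + Bx.indicator (fun _ => 2*ε) α) := by
          apply integral_mono_of_nonneg
          · exact Filter.Eventually.of_forall hy0
          · exact (integrableOn_const hfAy).add hBint
          · filter_upwards [ae_restrict_mem hAym] with α hα
            have hi : 0 ≤ Bx.indicator (fun _ => 2*ε) α :=
              indicator_nonneg (fun _ _ => by positivity) α
            rcases hAyAB α hα with h | h
            · have := hyA α h
              linarith
            · rw [indicator_of_mem h]
              rw [hAy] at hα
              have := hα.2.2
              linarith
      _ = K * (volume Ay).toReal + ∫ α in Ay, Bx.indicator (fun _ => 2*ε) α := by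
          have hKi : IntegrableOn (fun _ : ℝ => K) Ay := integrableOn_const hfAy
          rw [integral_add hKi hBint, setIntegral_const]
          simp [Measure.real, mul_comm]
      _ ≤ K * (volume Ay).toReal + 2*ε*mB := by
          gcongr
          rw [setIntegral_indicator hBxm, setIntegral_const, smul_eq_mul, mul_comm]
          gcongr
          exact ENNReal.toReal_mono (hfin _ hBxI) (measure_mono inter_subset_right)
  have hmAy0 := hvAx0.trans_le hmAy
  have h1 : (∫ α in Ay, y α) / (volume Ay).toReal ≤ K + 2*ε*(mB / a₁) := by
    rw [div_le_iff₀ hmAy0]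
    have h2 : mB ≤ mB / a₁ * (volume Ay).toReal := by
      rw [div_mul_eq_mul_div, le_div_iff₀ ha1]
      exact mul_le_mul_of_nonneg_left (hvAx.trans hmAy) hvB0
    nlinarith
  rw [hvA, mul_div_assoc]
  have h3 : 0 ≤ mB / a₁ := by positivity
  nlinarith
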